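/- Let f : ℝ/ℤ → [0,1] be an integrable Borel function, let N, ℓ ≥ 1 be integers, and let ε, ε' ∈ {0,1}^N. Assume the matrices T_N(f) + D_N(ε−1) and T_N(f) + D_N(ε'−1) are invertible (which holds whenever f ≢ 0 and f ≢ 1), so that in particular μ_f([ε]) > 0 and μ_f([ε']) > 0. Then μ_f([ε] ∩ σ^{−(N+ℓ)}[ε']) / ( μ_f([ε]) · μ_f([ε']) ) = det( I − H^f_{N,ℓ}(ε,ε') ), where H^f_{N,ℓ}(ε,ε') := [T_N(f)+D_N(ε'−1)]^{−1} · Λ_{N,ℓ}(f)* · [T_N(f)+D_N(ε−1)]^{−1} · Λ_{N,ℓ}(f). -/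

import Mathlib

open MeasureTheory Filter Matrix
open scoped ENNReal

/-- The `n`-th Fourier coefficient of a function on the circle `ℝ/ℤ`. -/
noncomputable def fhat (f : AddCircle (1:ℝ) → ℝ) (n : ℤ) : ℂ :=
  fourierCoeff (fun t => (f t : ℂ)) n

/-- `μ` is the stationary determinantal measure on `{0,1}^ℤ` with kernel `f̂(n-m)`. -/
def IsDeterminantal (f : AddCircle (1:ℝ) → ℝ) (μ : Measure (ℤ → Bool)) : Prop :=
  ∀ s : Finset ℤ,
    ((μ {x | ∀ n ∈ s, x n = true}).toReal : ℂ) =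
      Matrix.det (Matrix.of fun i j : s => fhat f ((i:ℤ) - (j:ℤ)))

/-- The σ-algebra on `ℤ → Bool` generated by the coordinates in `S`. -/
def coordSigma (S : Set ℤ) : MeasurableSpace (ℤ → Bool) :=
  MeasurableSpace.comap (fun x (n : S) => x (n : ℤ)) inferInstance

/-- The ψ-function `ψ_μ(ℓ)` of a measure on `{0,1}^ℤ`, valued in `[0,∞]`. -/
noncomputable def psi (μ : Measure (ℤ → Bool)) (ℓ : ℕ) : ℝ≥0∞ :=
  ⨆ (A : Set (ℤ → Bool)) (_ : MeasurableSet[coordSigma {n : ℤ | n ≤ 0}] A) (_ : 0 < μ A)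
    (B : Set (ℤ → Bool)) (_ : MeasurableSet[coordSigma {n : ℤ | (ℓ : ℤ) ≤ n}] B) (_ : 0 < μ B),
      ENNReal.ofReal |(μ (A ∩ B)).toReal / ((μ A).toReal * (μ B).toReal) - 1|

/-- The cylinder set `[ε] = {x : x_1 = ε_1, …, x_N = ε_N}` in `{0,1}^ℤ`. -/
def cyl {N : ℕ} (ε : Fin N → Bool) : Set (ℤ → Bool) :=
  {x | ∀ i : Fin N, x ((i : ℤ) + 1) = ε i}

/-- The shift `σ` on `{0,1}^ℤ`. -/
def shift (x : ℤ → Bool) : ℤ → Bool := fun n => x (n + 1)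

/-- A boolean seen as the complex number `0` or `1`. -/
def bc (b : Bool) : ℂ := if b then 1 else 0

/-- The `N×N` Toeplitz matrix `T_N(f) = (f̂(i-j))_{1 ≤ i,j ≤ N}`. -/
noncomputable def Tmat (f : AddCircle (1:ℝ) → ℝ) (N : ℕ) : Matrix (Fin N) (Fin N) ℂ :=
  Matrix.of fun i j => fhat f (((i : ℕ) : ℤ) - ((j : ℕ) : ℤ))

/-- The `N×N` matrix `Λ_{N,ℓ}(f) = (f̂(i-(j+N+ℓ)))_{1 ≤ i,j ≤ N}`. -/
noncomputable def Lmat (f : AddCircle (1:ℝ) → ℝ) (N ℓ : ℕ) : Matrix (Fin N) (Fin N) ℂ :=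
  Matrix.of fun i j => fhat f (((i : ℕ) : ℤ) - (((j : ℕ) : ℤ) + (N : ℤ) + (ℓ : ℤ)))

/-!
Prescribing the states of finitely many sites by a word `ε`, inclusion–exclusion over the sites
required to be empty is the same recursion as additivity of the determinant in the corresponding
rows, so the probability of the word is the determinant of the kernel matrix `K` with its row `i`
replaced by `e_i - K_i` whenever `ε_i = 0`; up to signs, this is `det (K + D(ε - 1))`. For two
disjoint families of sites this matrix has a `2 × 2` block form, and the Schur complement formula
exhibits the ratio as a single determinant.
-/

section OccupiedWord

variable {ι : Type*} [DecidableEq ι]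

/-- The partial word requiring the sites in `s` to be occupied and leaving the others free. -/
def occupiedWord (s : Finset ι) (i : ι) : Option Bool :=
  if i ∈ s then some true else none

lemma exists_eq_occupiedWord [Finite ι] {τ : ι → Option Bool} (hτ : ∀ i, τ i ≠ some false) :
    ∃ s : Finset ι, τ = occupiedWord s := by
  refine ⟨(Set.toFinite {i | τ i = some true}).toFinset, funext fun i => ?_⟩
  rcases h : τ i with _ | _ | _
  · simp [occupiedWord, h]
  · exact absurd h (hτ i)
  · simp [occupiedWord, h]

end OccupiedWord

section PartialWordMatrix

variable {ι R : Type*} [DecidableEq ι] [CommRing R]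

/-- The row `i` which a constraint on the state of site `i` imposes in the determinantal formula
for the probability of a partial word: the row of the kernel matrix `M` for an occupied site
(`some true`), its complement for an empty site (`some false`), and the row of the identity for an
unconstrained site (`none`). -/
def partialWordRow (M : Matrix ι ι R) (i : ι) : Option Bool → ι → R
  | none => (1 : Matrix ι ι R) i
  | some true => M i
  | some false => (1 : Matrix ι ι R) i - M i

/-- The matrix whose determinant is the probability of the partial word `τ` for a determinantal
process with kernel matrix `M`. -/
def partialWordMatrix (M : Matrix ι ι R) (τ : ι → Option Bool) : Matrix ι ι R :=
  Matrix.of fun i => partialWordRow M i (τ i)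

lemma partialWordMatrix_update (M : Matrix ι ι R) (τ : ι → Option Bool) (k : ι) (o : Option Bool) :
    partialWordMatrix M (Function.update τ k o) =
      (partialWordMatrix M τ).updateRow k (partialWordRow M k o) := by
  ext i j
  obtain rfl | hik := eq_or_ne i k
  · simp [partialWordMatrix]
  · simp [partialWordMatrix, hik]

variable [Fintype ι]

lemma det_partialWordMatrix_update_true_add_false (M : Matrix ι ι R) (τ : ι → Option Bool) (k : ι) :
    (partialWordMatrix M (Function.update τ k (some true))).det +
        (partialWordMatrix M (Function.update τ k (some false))).det =
      (partialWordMatrix M (Function.update τ k none)).det := by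
  simp only [partialWordMatrix_update]
  rw [← det_updateRow_add]
  simp only [partialWordRow, add_sub_cancel]

lemma det_partialWordMatrix_occupiedWord (M : Matrix ι ι R) (s : Finset ι) :
    (partialWordMatrix M (occupiedWord s)).det = (M.submatrix (↑) (↑) : Matrix s s R).det := by
  rw [← det_piecewise_one_eq_submatrix_det]
  congr 1
  ext i j
  by_cases hi : i ∈ s <;> simp [partialWordMatrix, partialWordRow, occupiedWord, hi]

end PartialWordMatrix

section WordMatrix

variable {ι κ : Type*}

/-- The sign `∏ (2 ε_i - 1)` of a word. -/
def wordSign [Fintype ι] (ε : ι → Bool) : ℂ :=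
  ∏ i, (2 * bc (ε i) - 1)

lemma wordSign_ne_zero [Fintype ι] (ε : ι → Bool) : wordSign ε ≠ 0 := by
  refine Finset.prod_ne_zero_iff.2 fun i _ => ?_
  cases ε i <;> norm_num [bc]

lemma wordSign_sumElim [Fintype ι] [Fintype κ] (ε : ι → Bool) (ε' : κ → Bool) :
    wordSign (Sum.elim ε ε') = wordSign ε * wordSign ε' := by
  simp only [wordSign, Fintype.prod_sum_type, Sum.elim_inl, Sum.elim_inr]

variable [DecidableEq ι] [DecidableEq κ]

/-- The matrix `M + D(ε - 1)` attached to a kernel matrix `M` and a word `ε`. -/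
def wordMatrix (M : Matrix ι ι ℂ) (ε : ι → Bool) : Matrix ι ι ℂ :=
  M + Matrix.diagonal fun i => bc (ε i) - 1

lemma partialWordMatrix_some [Fintype ι] (M : Matrix ι ι ℂ) (ε : ι → Bool) :
    partialWordMatrix M (fun i => some (ε i)) =
      Matrix.diagonal (fun i => 2 * bc (ε i) - 1) * wordMatrix M ε := by
  ext i j
  simp only [partialWordMatrix, of_apply, wordMatrix, diagonal_mul, Matrix.add_apply,
    diagonal_apply]
  cases ε i <;>
    simp only [partialWordRow, Pi.sub_apply, one_apply, bc, Bool.false_eq_true, if_true,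
      if_false] <;>
    split_ifs <;> ring

lemma det_partialWordMatrix_some [Fintype ι] (M : Matrix ι ι ℂ) (ε : ι → Bool) :
    (partialWordMatrix M fun i => some (ε i)).det = wordSign ε * (wordMatrix M ε).det := by
  rw [partialWordMatrix_some, det_mul, det_diagonal, wordSign]

lemma wordMatrix_submatrix_sumElim {Λ : Type*} (K : Matrix Λ Λ ℂ) (p : ι → Λ) (q : κ → Λ)
    (ε : ι → Bool) (ε' : κ → Bool) :
    wordMatrix (K.submatrix (Sum.elim p q) (Sum.elim p q)) (Sum.elim ε ε') =
      fromBlocks (wordMatrix (K.submatrix p p) ε) (K.submatrix p q) (K.submatrix q p)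
        (wordMatrix (K.submatrix q q) ε') := by
  ext (i | i) (j | j) <;> simp [wordMatrix, diagonal_apply]

end WordMatrix

lemma det_fromBlocks_eq_mul_det_one_sub {m n R : Type*} [Fintype m] [Fintype n] [DecidableEq m]
    [DecidableEq n] [CommRing R] (A : Matrix m m R) (B : Matrix m n R) (C : Matrix n m R)
    (D : Matrix n n R) (hA : IsUnit A.det) (hD : IsUnit D.det) :
    (fromBlocks A B C D).det = A.det * D.det * (1 - D⁻¹ * C * A⁻¹ * B).det := by
  let := invertibleOfIsUnitDet A hA
  have schur_eq : D - C * A⁻¹ * B = D * (1 - D⁻¹ * C * A⁻¹ * B) := by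
    simp only [Matrix.mul_sub, Matrix.mul_one, Matrix.mul_assoc, mul_nonsing_inv_cancel_left _ _ hD]
  rw [det_fromBlocks₁₁, invOf_eq_nonsing_inv, schur_eq, det_mul, mul_assoc]

section Events

variable {Λ ι κ : Type*}

/-- The event that the configuration at the sites `p` reads the partial word `τ`, where the sites
with `τ i = none` are unconstrained. -/
def partialWordEvent (p : ι → Λ) (τ : ι → Option Bool) : Set (Λ → Bool) :=
  {x | ∀ i, ∀ b ∈ τ i, x (p i) = b}

/-- The event that the configuration at the sites `p` reads the word `ε`. -/
def wordEvent (p : ι → Λ) (ε : ι → Bool) : Set (Λ → Bool) :=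
  {x | ∀ i, x (p i) = ε i}

lemma partialWordEvent_some (p : ι → Λ) (ε : ι → Bool) :
    partialWordEvent p (fun i => some (ε i)) = wordEvent p ε := by
  simp [partialWordEvent, wordEvent]

lemma wordEvent_sumElim (p : ι → Λ) (q : κ → Λ) (ε : ι → Bool) (ε' : κ → Bool) :
    wordEvent (Sum.elim p q) (Sum.elim ε ε') = wordEvent p ε ∩ wordEvent q ε' := by
  ext x
  simp [wordEvent]

variable [DecidableEq ι]

lemma partialWordEvent_occupiedWord (p : ι → Λ) (s : Finset ι) :
    partialWordEvent p (occupiedWord s) = {x | ∀ i ∈ s, x (p i) = true} := by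
  ext x
  simp [partialWordEvent, occupiedWord]

lemma mem_partialWordEvent_update {p : ι → Λ} {τ : ι → Option Bool} {k : ι} {o : Option Bool}
    {x : Λ → Bool} :
    x ∈ partialWordEvent p (Function.update τ k o) ↔
      (∀ b ∈ o, x (p k) = b) ∧ ∀ i ≠ k, ∀ b ∈ τ i, x (p i) = b :=
  Function.forall_update_iff τ (p := fun i o => ∀ b ∈ o, x (p i) = b)

lemma partialWordEvent_update_some (p : ι → Λ) (τ : ι → Option Bool) (k : ι) (b : Bool) :
    partialWordEvent p (Function.update τ k (some b)) =
      partialWordEvent p (Function.update τ k none) ∩ {x | x (p k) = b} := by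
  ext x
  simp [mem_partialWordEvent_update, and_comm]

lemma measureReal_partialWordEvent_update_true_add_false (μ : Measure (Λ → Bool))
    [IsFiniteMeasure μ] (p : ι → Λ) (τ : ι → Option Bool) (k : ι) :
    μ.real (partialWordEvent p (Function.update τ k (some true))) +
        μ.real (partialWordEvent p (Function.update τ k (some false))) =
      μ.real (partialWordEvent p (Function.update τ k none)) := by
  have measurable_occupied : MeasurableSet {x : Λ → Bool | x (p k) = true} :=
    measurableSet_eq_fun (measurable_pi_apply (p k)) measurable_const
  have compl_occupied : {x : Λ → Bool | x (p k) = false} = {x | x (p k) = true}ᶜ := by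
    ext x
    simp
  rw [partialWordEvent_update_some, partialWordEvent_update_some, compl_occupied,
    ← Set.sdiff_eq, measureReal_inter_add_sdiff measurable_occupied]

lemma measureReal_partialWordEvent_update_false_eq_det [Fintype ι] {μ : Measure (Λ → Bool)}
    [IsFiniteMeasure μ] {p : ι → Λ} {τ : ι → Option Bool} {k : ι} {M : Matrix ι ι ℂ}
    (h_none : (μ.real (partialWordEvent p (Function.update τ k none)) : ℂ) =
      (partialWordMatrix M (Function.update τ k none)).det)
    (h_true : (μ.real (partialWordEvent p (Function.update τ k (some true))) : ℂ) =
      (partialWordMatrix M (Function.update τ k (some true))).det) :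
    (μ.real (partialWordEvent p (Function.update τ k (some false))) : ℂ) =
      (partialWordMatrix M (Function.update τ k (some false))).det := by
  rw [eq_sub_of_add_eq' (measureReal_partialWordEvent_update_true_add_false μ p τ k),
    eq_sub_of_add_eq' (det_partialWordMatrix_update_true_add_false M τ k), Complex.ofReal_sub,
    h_none, h_true]

end Events

/-- `μ` is the law on `{0,1}^Λ` of a determinantal point process with correlation kernel `K`, a
configuration being encoded by the indicator function of its occupied sites. -/
def IsDeterminantalProcess {Λ : Type*} [DecidableEq Λ] (K : Matrix Λ Λ ℂ)
    (μ : Measure (Λ → Bool)) : Prop :=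
  ∀ s : Finset Λ,
    (μ.real {x | ∀ n ∈ s, x n = true} : ℂ) = (K.submatrix (↑) (↑) : Matrix s s ℂ).det

namespace IsDeterminantalProcess

variable {Λ ι κ : Type*} [DecidableEq Λ] {K : Matrix Λ Λ ℂ} {μ : Measure (Λ → Bool)}
  {p : ι → Λ} {q : κ → Λ}

lemma isProbabilityMeasure (hμ : IsDeterminantalProcess K μ) : IsProbabilityMeasure μ := by
  have real_univ : μ.real Set.univ = 1 := by
    simpa [det_isEmpty] using hμ ∅
  exact ⟨by simpa [measureReal_def, ENNReal.toReal_eq_one_iff] using real_univ⟩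

variable [DecidableEq ι]

lemma measureReal_forall_mem_eq_true (hμ : IsDeterminantalProcess K μ) (hp : Function.Injective p)
    (s : Finset ι) :
    (μ.real {x | ∀ i ∈ s, x (p i) = true} : ℂ) =
      ((K.submatrix p p).submatrix (↑) (↑) : Matrix s s ℂ).det := by
  have := hμ (s.map ⟨p, hp⟩)
  rw [← det_submatrix_equiv_self (s.equivMap ⟨p, hp⟩)] at this
  simpa [submatrix_submatrix, Function.comp_def] using this

variable [Fintype ι]

theorem measureReal_partialWordEvent (hμ : IsDeterminantalProcess K μ)
    (hp : Function.Injective p) (τ : ι → Option Bool) :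
    (μ.real (partialWordEvent p τ) : ℂ) = (partialWordMatrix (K.submatrix p p) τ).det := by
  have := hμ.isProbabilityMeasure
  suffices of_empty_sites_subset : ∀ (B : Finset ι) (τ : ι → Option Bool),
      (∀ i, τ i = some false → i ∈ B) →
        (μ.real (partialWordEvent p τ) : ℂ) = (partialWordMatrix (K.submatrix p p) τ).det from
    of_empty_sites_subset Finset.univ τ fun i _ => Finset.mem_univ i
  intro B
  induction B using Finset.induction_on with
  | empty =>
    intro τ hτ
    obtain ⟨s, rfl⟩ := exists_eq_occupiedWord (τ := τ) (by simpa using hτ)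
    rw [det_partialWordMatrix_occupiedWord, partialWordEvent_occupiedWord,
      hμ.measureReal_forall_mem_eq_true hp]
  | insert k B _ ih =>
    intro τ hτ
    have ih_update (o : Option Bool) (ho : o ≠ some false) :
        (μ.real (partialWordEvent p (Function.update τ k o)) : ℂ) =
          (partialWordMatrix (K.submatrix p p) (Function.update τ k o)).det :=
      ih _ fun i hi => by grind [Function.update_apply]
    rw [← Function.update_eq_self k τ]
    by_cases hk : τ k = some false
    · rw [hk]
      exact measureReal_partialWordEvent_update_false_eq_det (ih_update none (by simp))
        (ih_update (some true) (by simp))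
    · exact ih_update (τ k) hk

theorem measureReal_wordEvent (hμ : IsDeterminantalProcess K μ) (hp : Function.Injective p)
    (ε : ι → Bool) :
    (μ.real (wordEvent p ε) : ℂ) = wordSign ε * (wordMatrix (K.submatrix p p) ε).det := by
  rw [← partialWordEvent_some, hμ.measureReal_partialWordEvent hp, det_partialWordMatrix_some]

lemma measureReal_wordEvent_ne_zero (hμ : IsDeterminantalProcess K μ)
    (hp : Function.Injective p) {ε : ι → Bool}
    (hε : (wordMatrix (K.submatrix p p) ε).det ≠ 0) : (μ.real (wordEvent p ε) : ℂ) ≠ 0 := by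
  rw [hμ.measureReal_wordEvent hp]
  exact mul_ne_zero (wordSign_ne_zero ε) hε

lemma measure_wordEvent_pos (hμ : IsDeterminantalProcess K μ) (hp : Function.Injective p)
    {ε : ι → Bool} (hε : (wordMatrix (K.submatrix p p) ε).det ≠ 0) : 0 < μ (wordEvent p ε) := by
  have prob_ne_zero := Complex.ofReal_ne_zero.1 (hμ.measureReal_wordEvent_ne_zero hp hε)
  exact pos_iff_ne_zero.2 (ENNReal.toReal_ne_zero.1 prob_ne_zero).1

lemma measure_wordEvent_congr {ν : Type*} [Finite ν] {r r' : ν → Λ}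
    (hμ : IsDeterminantalProcess K μ) (hr : Function.Injective r) (hr' : Function.Injective r')
    (hK : K.submatrix r r = K.submatrix r' r') (ε : ν → Bool) :
    μ (wordEvent r ε) = μ (wordEvent r' ε) := by
  classical
  have := Fintype.ofFinite ν
  have := hμ.isProbabilityMeasure
  rw [← measureReal_eq_measureReal_iff, ← Complex.ofReal_inj, hμ.measureReal_wordEvent hr,
    hμ.measureReal_wordEvent hr', hK]

variable [Fintype κ] [DecidableEq κ]

lemma measureReal_wordEvent_inter (hμ : IsDeterminantalProcess K μ)
    (hpq : Function.Injective (Sum.elim p q)) (ε : ι → Bool) (ε' : κ → Bool)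
    (hε : IsUnit (wordMatrix (K.submatrix p p) ε).det)
    (hε' : IsUnit (wordMatrix (K.submatrix q q) ε').det) :
    (μ.real (wordEvent p ε ∩ wordEvent q ε') : ℂ) =
      μ.real (wordEvent p ε) * μ.real (wordEvent q ε') *
        (1 - (wordMatrix (K.submatrix q q) ε')⁻¹ * K.submatrix q p *
          (wordMatrix (K.submatrix p p) ε)⁻¹ * K.submatrix p q).det := by
  obtain ⟨hp, hq, -⟩ := Sum.elim_injective.1 hpq
  rw [← wordEvent_sumElim, hμ.measureReal_wordEvent hpq, hμ.measureReal_wordEvent hp,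
    hμ.measureReal_wordEvent hq, wordSign_sumElim, wordMatrix_submatrix_sumElim,
    det_fromBlocks_eq_mul_det_one_sub _ _ _ _ hε hε']
  ring

end IsDeterminantalProcess

theorem ratio_eq_det_general {Λ ι κ : Type*} [DecidableEq Λ] [Fintype ι] [DecidableEq ι]
    [Fintype κ] [DecidableEq κ] {K : Matrix Λ Λ ℂ} {μ : Measure (Λ → Bool)}
    (hμ : IsDeterminantalProcess K μ) {p : ι → Λ} {q : κ → Λ}
    (hpq : Function.Injective (Sum.elim p q)) (ε : ι → Bool) (ε' : κ → Bool)
    (hε : IsUnit (wordMatrix (K.submatrix p p) ε).det)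
    (hε' : IsUnit (wordMatrix (K.submatrix q q) ε').det) :
    0 < μ (wordEvent p ε) ∧ 0 < μ (wordEvent q ε') ∧
      ((μ.real (wordEvent p ε ∩ wordEvent q ε') /
          (μ.real (wordEvent p ε) * μ.real (wordEvent q ε')) : ℝ) : ℂ) =
        (1 - (wordMatrix (K.submatrix q q) ε')⁻¹ * K.submatrix q p *
          (wordMatrix (K.submatrix p p) ε)⁻¹ * K.submatrix p q).det := by
  obtain ⟨hp, hq, -⟩ := Sum.elim_injective.1 hpq
  have prob_ne_zero := hμ.measureReal_wordEvent_ne_zero hp hε.ne_zero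
  have prob_ne_zero' := hμ.measureReal_wordEvent_ne_zero hq hε'.ne_zero
  refine ⟨hμ.measure_wordEvent_pos hp hε.ne_zero, hμ.measure_wordEvent_pos hq hε'.ne_zero, ?_⟩
  rw [Complex.ofReal_div, Complex.ofReal_mul, hμ.measureReal_wordEvent_inter hpq ε ε' hε hε',
    mul_div_cancel_left₀ _ (mul_ne_zero prob_ne_zero prob_ne_zero')]

lemma star_fhat (f : AddCircle (1 : ℝ) → ℝ) (n : ℤ) : star (fhat f n) = fhat f (-n) := by
  simp only [fhat, fourierCoeff, ← starRingEnd_apply, ← integral_conj]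
  simp

/-- The kernel `K_f(n, m) = f̂(n - m)` on `ℤ`. -/
noncomputable def fourierKernel (f : AddCircle (1 : ℝ) → ℝ) : Matrix ℤ ℤ ℂ :=
  Matrix.of fun n m => fhat f (n - m)

lemma IsDeterminantal.isDeterminantalProcess {f : AddCircle (1 : ℝ) → ℝ} {μ : Measure (ℤ → Bool)}
    (hμ : IsDeterminantal f μ) : IsDeterminantalProcess (fourierKernel f) μ :=
  hμ

/-- The sites `k + 1, …, k + N`. -/
def window (N k : ℕ) (i : Fin N) : ℤ :=
  i + 1 + k

lemma window_injective (N k : ℕ) : Function.Injective (window N k) := fun i j h => by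
  simp only [window] at h
  grind

lemma sumElim_window_injective (N : ℕ) {k : ℕ} (hk : N ≤ k) :
    Function.Injective (Sum.elim (window N 0) (window N k)) := by
  rintro (i | i) (j | j) h <;> simp only [window, Sum.elim_inl, Sum.elim_inr] at h <;> grind

lemma shift_iterate_apply (k : ℕ) (x : ℤ → Bool) (n : ℤ) : shift^[k] x n = x (n + k) := by
  induction k generalizing x with
  | zero => simp
  | succ k ih => rw [Function.iterate_succ_apply, ih, shift, Nat.cast_succ, add_assoc]

lemma preimage_shift_iterate_cyl {N : ℕ} (k : ℕ) (ε : Fin N → Bool) :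
    shift^[k] ⁻¹' cyl ε = wordEvent (window N k) ε := by
  ext x
  simp [cyl, wordEvent, window, shift_iterate_apply]

lemma cyl_eq_wordEvent {N : ℕ} (ε : Fin N → Bool) : cyl ε = wordEvent (window N 0) ε :=
  preimage_shift_iterate_cyl 0 ε

lemma fourierKernel_submatrix_window (f : AddCircle (1 : ℝ) → ℝ) (N k : ℕ) :
    (fourierKernel f).submatrix (window N k) (window N k) = Tmat f N := by
  ext i j
  simp [fourierKernel, window, Tmat]

lemma IsDeterminantal.measure_preimage_shift_iterate_cyl {f : AddCircle (1 : ℝ) → ℝ}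
    {μ : Measure (ℤ → Bool)} (hμ : IsDeterminantal f μ) {N : ℕ} (k : ℕ) (ε : Fin N → Bool) :
    μ (shift^[k] ⁻¹' cyl ε) = μ (cyl ε) := by
  rw [preimage_shift_iterate_cyl, cyl_eq_wordEvent]
  exact hμ.isDeterminantalProcess.measure_wordEvent_congr (window_injective N k)
    (window_injective N 0) (by simp only [fourierKernel_submatrix_window]) ε

lemma fourierKernel_submatrix_window_zero_add (f : AddCircle (1 : ℝ) → ℝ) (N ℓ : ℕ) :
    (fourierKernel f).submatrix (window N 0) (window N (N + ℓ)) = Lmat f N ℓ := by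
  ext i j
  simp only [fourierKernel, window, Lmat, submatrix_apply, of_apply]
  push_cast
  ring_nf

lemma conjTranspose_fourierKernel (f : AddCircle (1 : ℝ) → ℝ) :
    (fourierKernel f)ᴴ = fourierKernel f := by
  ext n m
  simp [fourierKernel, star_fhat, -RCLike.star_def]

lemma fourierKernel_submatrix_window_add_zero (f : AddCircle (1 : ℝ) → ℝ) (N ℓ : ℕ) :
    (fourierKernel f).submatrix (window N (N + ℓ)) (window N 0) = (Lmat f N ℓ)ᴴ := by
  rw [← fourierKernel_submatrix_window_zero_add, conjTranspose_submatrix,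
    conjTranspose_fourierKernel]

/-- `μ_f([ε] ∩ σ^{-(N+ℓ)}[ε']) / (μ_f([ε])·μ_f([ε'])) = det(I - H^f_{N,ℓ}(ε,ε'))`. -/
theorem ratio_eq_det
    (f : AddCircle (1:ℝ) → ℝ) (hmeas : Measurable f)
    (h0 : ∀ t, 0 ≤ f t) (h1 : ∀ t, f t ≤ 1) (hint : Integrable f)
    (μ : Measure (ℤ → Bool)) [IsProbabilityMeasure μ] (hdet : IsDeterminantal f μ)
    (N ℓ : ℕ) (hN : 1 ≤ N) (hℓ : 1 ≤ ℓ) (ε ε' : Fin N → Bool)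
    (hinv : IsUnit (Tmat f N + Matrix.diagonal (fun i => bc (ε i) - 1)).det)
    (hinv' : IsUnit (Tmat f N + Matrix.diagonal (fun i => bc (ε' i) - 1)).det) :
    0 < μ (cyl ε) ∧ 0 < μ (cyl ε') ∧
      (((μ (cyl ε ∩ shift^[N + ℓ] ⁻¹' cyl ε')).toReal /
          ((μ (cyl ε)).toReal * (μ (cyl ε')).toReal) : ℝ) : ℂ) =
        (1 - (Tmat f N + Matrix.diagonal (fun i => bc (ε' i) - 1))⁻¹ * (Lmat f N ℓ)ᴴ *
            (Tmat f N + Matrix.diagonal (fun i => bc (ε i) - 1))⁻¹ * Lmat f N ℓ).det := by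
  have general := ratio_eq_det_general hdet.isDeterminantalProcess
    (sumElim_window_injective N (Nat.le_add_right N ℓ)) ε ε'
  simp only [wordMatrix, fourierKernel_submatrix_window, fourierKernel_submatrix_window_zero_add,
    fourierKernel_submatrix_window_add_zero, ← preimage_shift_iterate_cyl,
    measureReal_def, hdet.measure_preimage_shift_iterate_cyl] at general
  exact general hinv hinv'
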